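/- If P satisfies a margin condition with radius r_0, then there exists ε > 0 such that P is ε-separated; that is, the infimum of ℓ(c,c*) over all local minimizers c of the distortion R that are not optimal codebooks equals some ε > 0. -/

import Mathlib

open MeasureTheory Metric

noncomputable section

variable {H : Type*} [NormedAddCommGroup H] [InnerProductSpace ℝ H] [MeasurableSpace H]

/-- `qgamma k c x = min_j ‖x - c j‖²`. -/
def qgamma (k : ℕ) (c : Fin k → H) (x : H) : ℝ := ⨅ j : Fin k, ‖x - c j‖ ^ 2

/-- distortion (risk) of a codebook. -/
def qrisk (k : ℕ) (P : Measure H) (c : Fin k → H) : ℝ := ∫ x, qgamma k c x ∂P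

/-- the set of optimal codebooks. -/
def qopt (k : ℕ) (P : Measure H) : Set (Fin k → H) :=
  {c | ∀ c' : Fin k → H, qrisk k P c ≤ qrisk k P c'}

/-- the `i`-th (closed) Voronoi cell of the codebook `c`. -/
def vcell (k : ℕ) (c : Fin k → H) (i : Fin k) : Set H :=
  {x | ∀ j : Fin k, ‖x - c i‖ ≤ ‖x - c j‖}

/-- `B`, the minimal separation between code points of optimal codebooks. -/
def qB (k : ℕ) (P : Measure H) : ℝ :=
  sInf {b | ∃ c ∈ qopt k P, ∃ i j : Fin k, i ≠ j ∧ b = ‖c i - c j‖}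

/-- `p_min`, the minimal mass of a Voronoi cell of an optimal codebook. -/
def qpmin (k : ℕ) (P : Measure H) : ℝ :=
  sInf {p | ∃ c ∈ qopt k P, ∃ i : Fin k, p = (P (vcell k c i)).toReal}

/-- `N_{c*}`, the union of the boundaries between Voronoi cells. -/
def nbd (k : ℕ) (c : Fin k → H) : Set H :=
  ⋃ (i : Fin k) (j : Fin k) (_ : i ≠ j), vcell k c i ∩ vcell k c j

/-- the weight function `p(t)`, the maximal mass of the closed `t`-neighborhood
of `N_{c*}` over optimal codebooks `c*`. -/
def pweight (k : ℕ) (P : Measure H) (t : ℝ) : ℝ :=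
  sSup {p | ∃ c ∈ qopt k P, p = (P (cthickening t (nbd k c))).toReal}

/-- `P` is `M`-bounded: its support is contained in the closed ball `B(0,M)`. -/
def mbounded (P : Measure H) (M : ℝ) : Prop := P (closedBall (0 : H) M)ᶜ = 0

/-- the support of `P` contains more than `k` points. -/
def suppGT (P : Measure H) (k : ℕ) : Prop :=
  ∀ S : Finset H, S.card ≤ k → P ((S : Set H)ᶜ) ≠ 0

/-- the margin condition with radius `r0`. -/
def margin (k : ℕ) (P : Measure H) (M r0 : ℝ) : Prop :=
  0 < r0 ∧ mbounded P M ∧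
    ∀ t : ℝ, 0 ≤ t → t ≤ r0 → pweight k P t ≤ qB k P * qpmin k P * t / (128 * M ^ 2)

/-- `P` is `ε`-separated: the infimum of the excess risk over local minimizers of
the distortion which are not optimal codebooks equals `ε`. -/
def qseparated (k : ℕ) (P : Measure H) (ε : ℝ) : Prop :=
  ∀ cs ∈ qopt k P,
    sInf {r | ∃ c : Fin k → H, IsLocalMin (qrisk k P) c ∧ c ∉ qopt k P ∧
      r = qrisk k P c - qrisk k P cs} = ε

/-
Along a minimizing sequence of codebooks the squared distances to the code points converge, after
extraction, to squared distances to the weak limits plus nonnegative weights, the energy lost in the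
weak limit. Since the support of `P` has more than `k` points, each cell of an optimal codebook has
positive mass where its code point is strictly nearest, so a limit of minimal risk carries no
weight: minimizing sequences converge strongly, and off any neighborhood of the optimal codebooks
the risk exceeds its minimum by a fixed amount.

Local minimizers satisfy the centroid condition. If `a` is optimal and `c` is centroidal with
`dist c a = δ` small, the Voronoi cells of `a` and `c` differ only within distance `4 M δ / b` of
the boundary `N_a`, where `b` is the separation of `a`. Barycenters therefore move by at most
`3 M p(4 M δ / b) / p_min`, which the margin condition makes smaller than `δ` unless `δ = 0`. Hence
local minimizers near the optimal codebooks are optimal, and the others have a uniform excess risk.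
-/

open Filter Topology

section Preliminaries

theorem tendsto_ciInf_of_finite {ι α L : Type*} [Finite ι] [Nonempty ι]
    [ConditionallyCompleteLinearOrder L] [TopologicalSpace L] [ContinuousInf L]
    {f : ι → α → L} {g : ι → L} {l : Filter α} (h : ∀ i, Tendsto (f i) l (𝓝 (g i))) :
    Tendsto (fun a => ⨅ i, f i a) l (𝓝 (⨅ i, g i)) := by
  have := Fintype.ofFinite ι
  simpa only [Finset.inf'_univ_eq_ciInf] using
    Tendsto.finset_inf'_nhds_apply Finset.univ_nonempty fun i _ => h i

theorem ae_forall_of_forall_ae_of_isClosed {α Y : Type*} [MeasurableSpace α] {μ : Measure α}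
    [TopologicalSpace Y] [TopologicalSpace.SeparableSpace Y] {p : α → Y → Prop}
    (hclosed : ∀ x, IsClosed {y | p x y}) (h : ∀ y, ∀ᵐ x ∂μ, p x y) : ∀ᵐ x ∂μ, ∀ y, p x y := by
  obtain ⟨s, hs, hdense⟩ := TopologicalSpace.exists_countable_dense Y
  filter_upwards [(ae_ball_iff hs).2 fun y _ => h y] with x hx
  exact fun y => (hclosed x).closure_subset_iff.2 hx (hdense y)

theorem norm_setIntegral_sub_setIntegral_le {α F : Type*} [MeasurableSpace α] {μ : Measure α}
    [IsFiniteMeasure μ] [NormedAddCommGroup F] [NormedSpace ℝ F] {f : α → F} {s t : Set α} {C : ℝ}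
    (hs : MeasurableSet s) (ht : MeasurableSet t) (hf : Integrable f μ)
    (hC : ∀ᵐ x ∂μ, ‖f x‖ ≤ C) :
    ‖∫ x in s, f x ∂μ - ∫ x in t, f x ∂μ‖ ≤ C * μ.real (symmDiff s t) := by
  have hbound (u : Set α) : ‖∫ x in u, f x ∂μ‖ ≤ C * μ.real u :=
    norm_setIntegral_le_of_norm_le_const_ae (measure_lt_top _ _) (ae_restrict_of_ae hC)
  calc ‖∫ x in s, f x ∂μ - ∫ x in t, f x ∂μ‖
      = ‖∫ x in s \ t, f x ∂μ - ∫ x in t \ s, f x ∂μ‖ := by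
        rw [← integral_inter_add_sdiff ht hf.integrableOn,
          ← integral_inter_add_sdiff (s := t) hs hf.integrableOn, Set.inter_comm t s,
          add_sub_add_left_eq_sub]
    _ ≤ C * μ.real (s \ t) + C * μ.real (t \ s) :=
        (norm_sub_le _ _).trans (add_le_add (hbound _) (hbound _))
    _ = C * μ.real (symmDiff s t) := by
        rw [← mul_add, Set.symmDiff_def,
          measureReal_union (disjoint_sdiff_sdiff) (ht.diff hs)]

end Preliminaries

section WeakCompactness

variable {E : Type*} [NormedAddCommGroup E] [InnerProductSpace ℝ E] [CompleteSpace E]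
  [TopologicalSpace.SeparableSpace E]

theorem exists_subseq_tendsto_inner {u : ℕ → E} {C : ℝ} (hu : ∀ n, ‖u n‖ ≤ C) :
    ∃ (a : E) (φ : ℕ → ℕ), StrictMono φ ∧
      ∀ v, Tendsto (fun n => inner ℝ (u (φ n)) v) atTop (𝓝 (inner ℝ a v)) := by
  obtain ⟨g, -, φ, hφ, hlim⟩ := WeakDual.isSeqCompact_closedBall ℝ E 0 C
    (x := fun n => StrongDual.toWeakDual (InnerProductSpace.toDual ℝ E (u n))) (by simpa using hu)
  refine ⟨(InnerProductSpace.toDual ℝ E).symm (WeakDual.toStrongDual g), φ, hφ, fun v => ?_⟩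
  rw [InnerProductSpace.toDual_symm_apply]
  exact ((WeakDual.eval_continuous v).tendsto g).comp hlim

theorem exists_subseq_forall_tendsto_inner {ι : Type*} [Finite ι] {u : ℕ → ι → E} {C : ℝ}
    (hu : ∀ n i, ‖u n i‖ ≤ C) :
    ∃ (a : ι → E) (φ : ℕ → ℕ), StrictMono φ ∧
      ∀ i v, Tendsto (fun n => inner ℝ (u (φ n) i) v) atTop (𝓝 (inner ℝ (a i) v)) := by
  classical
  have := Fintype.ofFinite ι
  have hbound (n : ℕ) : ‖WithLp.toLp 2 (u n)‖ ≤ √(∑ _i : ι, C ^ 2) := by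
    rw [PiLp.norm_eq_of_L2]
    gcongr with i
    exact hu n i
  obtain ⟨a, φ, hφ, hlim⟩ := exists_subseq_tendsto_inner hbound
  exact ⟨a, φ, hφ, fun i v => by
    simpa [PiLp.inner_apply, Pi.single_apply, apply_ite] using hlim (PiLp.single 2 i v)⟩

/- With `a` the weak limit, `w i` is the limit of `‖c (φ n) i - a i‖ ^ 2`, the energy lost in the
passage to the limit; convergence is strong exactly when `w = 0`. -/
theorem exists_subseq_tendsto_norm_sub_sq {ι : Type*} [Finite ι] {c : ℕ → ι → E} {C : ℝ}
    (hc : ∀ n i, ‖c n i‖ ≤ C) :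
    ∃ (a : ι → E) (w : ι → ℝ) (φ : ℕ → ℕ), StrictMono φ ∧
      ∀ i x, Tendsto (fun n => ‖x - c (φ n) i‖ ^ 2) atTop (𝓝 (‖x - a i‖ ^ 2 + w i)) := by
  have := Fintype.ofFinite ι
  obtain ⟨a, φ, hφ, hweak⟩ := exists_subseq_forall_tendsto_inner hc
  have hbounded (n : ℕ) : (fun i => ‖c (φ n) i‖) ∈ Set.pi Set.univ fun _ : ι => Set.Icc 0 C :=
    fun i _ => ⟨norm_nonneg _, hc _ i⟩
  obtain ⟨r, -, ψ, hψ, hr⟩ := tendsto_subseq_of_bounded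
    (Bornology.IsBounded.pi fun _ : ι => isBounded_Icc 0 C) hbounded
  refine ⟨a, fun i => r i ^ 2 - ‖a i‖ ^ 2, φ ∘ ψ, hφ.comp hψ, fun i x => ?_⟩
  have hinner := ((hweak i x).comp hψ.tendsto_atTop).const_mul 2
  have hnorm := (tendsto_pi_nhds.1 hr i).pow 2
  convert (tendsto_const_nhds (x := ‖x‖ ^ 2)).sub hinner |>.add hnorm using 2
  · simp only [Function.comp_apply, norm_sub_sq_real, real_inner_comm]
  · rw [norm_sub_sq_real, real_inner_comm]
    ring

end WeakCompactness

section Geometry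

variable {E : Type*} [NormedAddCommGroup E] [InnerProductSpace ℝ E]

theorem exists_equidistant_dist_mul_eq (x p q : E) (h : ‖x - p‖ ≤ ‖x - q‖) :
    ∃ y, ‖y - p‖ = ‖y - q‖ ∧ dist x y * (2 * ‖p - q‖) = ‖x - q‖ ^ 2 - ‖x - p‖ ^ 2 := by
  obtain rfl | hpq := eq_or_ne p q
  · exact ⟨x, rfl, by simp⟩
  have hpos : 0 < ‖q - p‖ := norm_pos_iff.2 (sub_ne_zero.2 hpq.symm)
  set D := ‖x - q‖ ^ 2 - ‖x - p‖ ^ 2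
  have hD0 : 0 ≤ D := sub_nonneg.2 (by gcongr)
  set s := D / (2 * ‖q - p‖ ^ 2)
  have hs : 2 * s * ‖q - p‖ ^ 2 = D := by simp only [s]; field_simp
  have hexpand (y : E) :
      ‖y - q‖ ^ 2 - ‖y - p‖ ^ 2 = ‖q - p‖ ^ 2 - 2 * inner ℝ (y - p) (q - p) := by
    rw [← sub_sub_sub_cancel_right y q p, norm_sub_sq_real]
    ring
  refine ⟨x + s • (q - p), ?_, ?_⟩
  · have hinner : inner ℝ (x + s • (q - p) - p) (q - p)
        = inner ℝ (x - p) (q - p) + s * ‖q - p‖ ^ 2 := by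
      rw [add_sub_right_comm, inner_add_left, real_inner_smul_left, real_inner_self_eq_norm_sq]
    rw [← sq_eq_sq₀ (norm_nonneg _) (norm_nonneg _)]
    linarith [hexpand (x + s • (q - p)), hexpand x]
  · rw [dist_self_add_right, norm_smul, Real.norm_of_nonneg (by positivity), norm_sub_rev p q, ← hs]
    ring

theorem exists_norm_le_forall_norm_sub_le {ρ : ℝ} (hρ : 0 ≤ ρ) (y : E) :
    ∃ z, ‖z‖ ≤ ρ ∧ (‖z‖ < ρ → z = y) ∧ ∀ x, ‖x‖ ≤ ρ → ‖x - z‖ ≤ ‖x - y‖ := by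
  obtain hy | hy := le_or_gt ‖y‖ ρ
  · exact ⟨y, hy, fun _ => rfl, fun _ _ => le_rfl⟩
  have hy0 : 0 < ‖y‖ := hρ.trans_lt hy
  set s := ρ / ‖y‖
  have hs0 : 0 ≤ s := by positivity
  have hs1 : s ≤ 1 := (div_le_one hy0).2 hy.le
  have hsy : s * ‖y‖ = ρ := div_mul_cancel₀ ρ hy0.ne'
  have hnorm : ‖s • y‖ = ρ := by rw [norm_smul, Real.norm_of_nonneg hs0, hsy]
  refine ⟨s • y, hnorm.le, fun h => absurd h hnorm.not_lt, fun x hx => ?_⟩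
  have hinner : inner ℝ x y ≤ ρ * ‖y‖ := (real_inner_le_norm x y).trans (by gcongr)
  rw [← sq_le_sq₀ (norm_nonneg _) (norm_nonneg _), norm_sub_sq_real, norm_sub_sq_real,
    real_inner_smul_right, hnorm]
  nlinarith [mul_le_mul_of_nonneg_left hinner (sub_nonneg.2 hs1), sq_nonneg (‖y‖ - ρ)]

end Geometry

section Barycenter

variable {E : Type*} [NormedAddCommGroup E] [MeasurableSpace E] {μ : Measure E} [IsFiniteMeasure μ]

theorem integrable_norm_sub_sq (hμ : MemLp id 2 μ) (y : E) :
    Integrable (fun x => ‖x - y‖ ^ 2) μ :=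
  (hμ.sub (memLp_const y)).integrable_norm_pow two_ne_zero

theorem integrable_sub_const (hμ : Integrable id μ) (y : E) : Integrable (fun x => x - y) μ :=
  hμ.sub (integrable_const y)

variable [InnerProductSpace ℝ E] [CompleteSpace E]

theorem integral_norm_sub_sq_eq (hμ : MemLp id 2 μ) (y z : E) :
    ∫ x, ‖x - y‖ ^ 2 ∂μ
      = ∫ x, ‖x - z‖ ^ 2 ∂μ + 2 * inner ℝ (z - y) (∫ x, x - z ∂μ)
        + μ.real Set.univ * ‖z - y‖ ^ 2 := by
  have hsub := integrable_sub_const (hμ.integrable one_le_two) z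
  have hcross : Integrable (fun x => 2 * inner ℝ (z - y) (x - z)) μ :=
    (hsub.const_inner _).const_mul 2
  have hsum : Integrable (fun x => ‖x - z‖ ^ 2 + 2 * inner ℝ (z - y) (x - z)) μ :=
    (integrable_norm_sub_sq hμ z).add hcross
  have hexpand (x : E) :
      ‖x - y‖ ^ 2 = ‖x - z‖ ^ 2 + 2 * inner ℝ (z - y) (x - z) + ‖z - y‖ ^ 2 := by
    rw [← sub_add_sub_cancel x z y, norm_add_sq_real, real_inner_comm]
  rw [integral_congr_ae (ae_of_all _ hexpand), integral_add hsum (integrable_const _),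
    integral_add (integrable_norm_sub_sq hμ z) hcross, integral_const_mul, integral_inner hsub,
    integral_const, smul_eq_mul]

theorem integral_sub_eq_zero_of_isLocalMin (hμ : MemLp id 2 μ) {z : E}
    (hz : IsLocalMin (fun y => ∫ x, ‖x - y‖ ^ 2 ∂μ) z) : ∫ x, x - z ∂μ = 0 := by
  set v := ∫ x, x - z ∂μ with hv
  have hline (s : ℝ) : ∫ x, ‖x - (z + s • v)‖ ^ 2 ∂μ
      = ∫ x, ‖x - z‖ ^ 2 ∂μ - 2 * ‖v‖ ^ 2 * s + μ.real Set.univ * ‖v‖ ^ 2 * s ^ 2 := by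
    rw [integral_norm_sub_sq_eq hμ _ z, sub_add_cancel_left, ← hv, inner_neg_left,
      real_inner_smul_left, real_inner_self_eq_norm_sq, norm_neg, norm_smul, mul_pow,
      Real.norm_eq_abs, sq_abs]
    ring
  have hmin : IsLocalMin (fun s : ℝ => ∫ x, ‖x - (z + s • v)‖ ^ 2 ∂μ) 0 :=
    IsLocalMin.comp_continuous (f := fun y => ∫ x, ‖x - y‖ ^ 2 ∂μ) (g := fun s : ℝ => z + s • v)
      (by simpa using hz) (by fun_prop)
  have hderiv : HasDerivAt (fun s : ℝ => ∫ x, ‖x - (z + s • v)‖ ^ 2 ∂μ) (-(2 * ‖v‖ ^ 2)) 0 := by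
    simp only [hline]
    have hlinear := (hasDerivAt_id (0 : ℝ)).const_mul (2 * ‖v‖ ^ 2)
    have hquadratic := (hasDerivAt_pow 2 (0 : ℝ)).const_mul (μ.real Set.univ * ‖v‖ ^ 2)
    exact ((hlinear.const_sub (∫ x, ‖x - z‖ ^ 2 ∂μ)).add hquadratic).congr_deriv (by simp)
  simpa using hmin.hasDerivAt_eq_zero hderiv

theorem integral_norm_sub_sq_le_of_integral_sub_eq_zero (hμ : MemLp id 2 μ) {z : E}
    (hz : ∫ x, x - z ∂μ = 0) (y : E) : ∫ x, ‖x - z‖ ^ 2 ∂μ ≤ ∫ x, ‖x - y‖ ^ 2 ∂μ := by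
  rw [integral_norm_sub_sq_eq hμ y z, hz, inner_zero_right, mul_zero, add_zero]
  exact le_add_of_nonneg_right (by positivity)

theorem integral_sub_const (hμ : Integrable id μ) (y : E) :
    ∫ x, x - y ∂μ = ∫ x, x ∂μ - μ.real Set.univ • y := by
  rw [integral_sub (f := fun x => x) hμ (integrable_const y), integral_const]

theorem mem_of_integral_sub_eq_zero [NeZero μ] (hμ : Integrable id μ) {K : Set E} {p : E}
    (hK : Convex ℝ K) (hKc : IsClosed K) (hμK : ∀ᵐ x ∂μ, x ∈ K) (hp : ∫ x, x - p ∂μ = 0) :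
    p ∈ K := by
  rw [integral_sub_const hμ, sub_eq_zero] at hp
  have haverage : ⨍ x, x ∂μ = p := by
    rw [average_eq, hp, inv_smul_smul₀ measureReal_univ_ne_zero]
  exact haverage ▸ hK.average_mem hKc hμK hμ

theorem measureReal_mul_norm_sub_le (hμ : Integrable id μ) {s t : Set E} {p q : E} {M : ℝ}
    (hM : ∀ᵐ x ∂μ, ‖x‖ ≤ M) (hs : MeasurableSet s) (ht : MeasurableSet t)
    (hp : ∫ x in s, (x - p) ∂μ = 0) (hq : ∫ x in t, (x - q) ∂μ = 0) :
    μ.real s * ‖q - p‖ ≤ (M + ‖q‖) * μ.real (symmDiff s t) := by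
  have hshift : ∫ x in s, (x - q) ∂μ - ∫ x in t, (x - q) ∂μ = -(μ.real s • (q - p)) := by
    rw [hq, sub_zero]
    rw [integral_sub_const hμ.integrableOn, measureReal_restrict_apply_univ, sub_eq_zero] at hp
    rw [integral_sub_const hμ.integrableOn, measureReal_restrict_apply_univ, hp, ← smul_sub,
      ← smul_neg, neg_sub]
  calc μ.real s * ‖q - p‖ = ‖∫ x in s, (x - q) ∂μ - ∫ x in t, (x - q) ∂μ‖ := by
        rw [hshift, norm_neg, norm_smul, Real.norm_of_nonneg measureReal_nonneg]
    _ ≤ (M + ‖q‖) * μ.real (symmDiff s t) := by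
        refine norm_setIntegral_sub_setIntegral_le hs ht (integrable_sub_const hμ q) ?_
        filter_upwards [hM] with x hx
        exact (norm_sub_le _ _).trans (by gcongr)

end Barycenter

section Distortion

variable {E : Type*} [NormedAddCommGroup E] {k : ℕ}

/-- The additively weighted (power) distance `min_j (‖x - c j‖² + w j)`. It arises as the limit of
`qgamma` along a weakly convergent sequence of codebooks, the weights recording the energy lost in
the limit; `w = 0` gives back `qgamma`. -/
def qpower (k : ℕ) (c : Fin k → E) (w : Fin k → ℝ) (x : E) : ℝ := ⨅ j, (‖x - c j‖ ^ 2 + w j)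

theorem qpower_zero (c : Fin k → E) : qpower k c 0 = qgamma k c := by
  ext x
  simp [qpower, qgamma]

theorem qpower_le (c : Fin k → E) (w : Fin k → ℝ) (x : E) (i : Fin k) :
    qpower k c w x ≤ ‖x - c i‖ ^ 2 + w i :=
  ciInf_le (Set.finite_range _).bddBelow i

theorem qgamma_le (c : Fin k → E) (x : E) (i : Fin k) : qgamma k c x ≤ ‖x - c i‖ ^ 2 :=
  ciInf_le (Set.finite_range _).bddBelow i

theorem qgamma_nonneg (c : Fin k → E) (x : E) : 0 ≤ qgamma k c x :=
  Real.iInf_nonneg fun _ => by positivity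

theorem isClosed_vcell (c : Fin k → E) (i : Fin k) : IsClosed (vcell k c i) := by
  simp only [vcell, Set.ofPred_forall]
  exact isClosed_iInter fun j => isClosed_le (by fun_prop) (by fun_prop)

variable [NeZero k]

theorem qgamma_le_qpower (c : Fin k → E) {w : Fin k → ℝ} (hw : 0 ≤ w) (x : E) :
    qgamma k c x ≤ qpower k c w x :=
  le_ciInf fun i => (qgamma_le c x i).trans (le_add_of_nonneg_right (hw i))

theorem exists_mem_vcell (c : Fin k → E) (x : E) : ∃ i, x ∈ vcell k c i :=
  Finite.exists_min fun i => ‖x - c i‖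

theorem qgamma_eq_of_mem_vcell {c : Fin k → E} {x : E} {i : Fin k} (h : x ∈ vcell k c i) :
    qgamma k c x = ‖x - c i‖ ^ 2 :=
  le_antisymm (qgamma_le c x i) (le_ciInf fun j => by gcongr; exact h j)

theorem qgamma_mono {c c' : Fin k → E} {x : E} (h : ∀ i, ‖x - c i‖ ≤ ‖x - c' i‖) :
    qgamma k c x ≤ qgamma k c' x :=
  le_ciInf fun i => (qgamma_le c x i).trans (by gcongr; exact h i)

theorem qgamma_update_le {c : Fin k → E} {x : E} {i j : Fin k} (hij : j ≠ i)
    (h : ‖x - c j‖ ≤ ‖x - c i‖) (y : E) :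
    qgamma k (Function.update c i y) x ≤ qgamma k c x := by
  refine le_ciInf fun l => ?_
  obtain rfl | hl := eq_or_ne l i
  · grw [qgamma_le _ x j, Function.update_of_ne hij, h]
  · grw [qgamma_le _ x l, Function.update_of_ne hl]

theorem continuous_qpower (c : Fin k → E) (w : Fin k → ℝ) : Continuous (qpower k c w) :=
  continuous_iff_continuousAt.2 fun _ =>
    tendsto_ciInf_of_finite fun i => Continuous.tendsto (by fun_prop) _

variable [MeasurableSpace E] [BorelSpace E] {P : Measure E} [IsFiniteMeasure P]

theorem integrable_qpower (hP : MemLp id 2 P) (c : Fin k → E) {w : Fin k → ℝ} (hw : 0 ≤ w) :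
    Integrable (qpower k c w) P := by
  refine Integrable.mono' ((integrable_norm_sub_sq hP (c 0)).add (integrable_const (w 0)))
    (continuous_qpower c w).aestronglyMeasurable (ae_of_all _ fun x => ?_)
  rw [Real.norm_of_nonneg ((qgamma_nonneg c x).trans (qgamma_le_qpower c hw x))]
  exact qpower_le c w x 0

theorem integrable_qgamma (hP : MemLp id 2 P) (c : Fin k → E) : Integrable (qgamma k c) P :=
  qpower_zero c ▸ integrable_qpower hP c le_rfl

end Distortion

section OptimalCodebooks

variable {E : Type*} [MeasurableSpace E] {k : ℕ} {P : Measure E}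

theorem suppGT.not_ae_mem_range (h : suppGT P k) (a : Fin k → E) :
    ¬ ∀ᵐ x ∂P, x ∈ Set.range a := by
  classical
  intro hmem
  refine h (Finset.univ.image a) (Finset.card_image_le.trans (by simp)) ?_
  simpa [ae_iff, Set.compl_def] using hmem

theorem suppGT.nontrivial [Nonempty E] [NeZero k] (h : suppGT P k) : Nontrivial E := by
  refine not_subsingleton_iff_nontrivial.1 fun _ => ?_
  exact h.not_ae_mem_range (fun _ => Classical.arbitrary E)
    (ae_of_all _ fun x => ⟨0, Subsingleton.elim _ _⟩)

variable [NormedAddCommGroup E] {M : ℝ}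

theorem mbounded.ae_norm_le (h : mbounded P M) : ∀ᵐ x ∂P, ‖x‖ ≤ M :=
  Filter.Eventually.mono (mem_ae_iff.2 h) fun _ => mem_closedBall_zero_iff.1

variable [BorelSpace E] [IsFiniteMeasure P]

theorem mbounded.memLp_id [SecondCountableTopology E] (h : mbounded P M) (p : ENNReal) :
    MemLp id p P :=
  MemLp.of_bound aestronglyMeasurable_id M h.ae_norm_le

variable [NeZero k]

/- If cell `i` had no strict mass, `a i` could be moved anywhere for free, so that almost every
point would already be a code point. -/
theorem frequently_forall_norm_sub_lt_of_mem_qopt [TopologicalSpace.SeparableSpace E]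
    (hP : MemLp id 2 P) (hsupp : suppGT P k) {a : Fin k → E} (ha : a ∈ qopt k P) (i : Fin k) :
    ∃ᵐ x ∂P, ∀ j ≠ i, ‖x - a i‖ < ‖x - a j‖ := by
  intro hnot
  have hfree (y : E) : ∀ᵐ x ∂P, qgamma k a x ≤ ‖x - y‖ ^ 2 := by
    have hle : qgamma k (Function.update a i y) ≤ᵐ[P] qgamma k a := by
      filter_upwards [hnot] with x hx
      push Not at hx
      obtain ⟨j, hji, hj⟩ := hx
      exact qgamma_update_le hji hj y
    have hrisk : qrisk k P (Function.update a i y) = qrisk k P a :=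
      (integral_mono_ae (integrable_qgamma hP _) (integrable_qgamma hP _) hle).antisymm (ha _)
    filter_upwards [(integral_eq_iff_of_ae_le (integrable_qgamma hP _) (integrable_qgamma hP _)
      hle).1 hrisk] with x hx
    rw [← hx]
    simpa using qgamma_le (Function.update a i y) x i
  refine hsupp.not_ae_mem_range a ?_
  filter_upwards [ae_forall_of_forall_ae_of_isClosed
    (fun x => isClosed_le continuous_const (by fun_prop)) hfree] with x hx
  obtain ⟨j, hj⟩ := exists_mem_vcell a x
  have hzero : ‖x - a j‖ ^ 2 ≤ 0 := by simpa [qgamma_eq_of_mem_vcell hj] using hx x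
  exact ⟨j, (sub_eq_zero.1 (norm_eq_zero.1 (pow_eq_zero_iff two_ne_zero |>.1
    (hzero.antisymm (by positivity))))).symm⟩

theorem injective_of_mem_qopt [TopologicalSpace.SeparableSpace E] (hP : MemLp id 2 P)
    (hsupp : suppGT P k) {a : Fin k → E} (ha : a ∈ qopt k P) : Function.Injective a := by
  intro i j hij
  by_contra hne
  obtain ⟨x, hx⟩ := (frequently_forall_norm_sub_lt_of_mem_qopt hP hsupp ha i).exists
  exact (hx j (Ne.symm hne)).ne (by rw [hij])

theorem measure_vcell_ne_zero_of_mem_qopt [TopologicalSpace.SeparableSpace E] (hP : MemLp id 2 P)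
    (hsupp : suppGT P k) {a : Fin k → E} (ha : a ∈ qopt k P) (i : Fin k) :
    P (vcell k a i) ≠ 0 := by
  intro hzero
  refine frequently_forall_norm_sub_lt_of_mem_qopt hP hsupp ha i ?_
  filter_upwards [measure_eq_zero_iff_ae_notMem.1 hzero] with x hx hlt
  refine hx fun j => ?_
  obtain rfl | hji := eq_or_ne j i
  exacts [le_rfl, (hlt j hji).le]

end OptimalCodebooks

section Centroids

variable {E : Type*} [NormedAddCommGroup E] [InnerProductSpace ℝ E] [MeasurableSpace E]
  {k : ℕ} {P : Measure E} {c : Fin k → E}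

/-- The centroid condition: each code point is the barycenter of its Voronoi cell, stated as the
vanishing of the first moment so that cells of measure zero satisfy it trivially. -/
def qcentroidal (k : ℕ) (P : Measure E) (c : Fin k → E) : Prop :=
  ∀ i, ∫ x in vcell k c i, (x - c i) ∂P = 0

variable [CompleteSpace E] [IsFiniteMeasure P]

theorem qcentroidal.norm_le (hc : qcentroidal k P c) {M : ℝ} (hP : Integrable id P)
    (hM : mbounded P M) {i : Fin k} (hi : P (vcell k c i) ≠ 0) : ‖c i‖ ≤ M := by
  have : NeZero (P.restrict (vcell k c i)) := ⟨Measure.restrict_eq_zero.not.2 hi⟩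
  rw [← mem_closedBall_zero_iff]
  exact mem_of_integral_sub_eq_zero hP.integrableOn (convex_closedBall 0 M) isClosed_closedBall
    (ae_restrict_of_ae (mem_ae_iff.2 hM)) (hc i)

variable [NeZero k] [BorelSpace E]

theorem qcentroidal_of_isLocalMin (hP : MemLp id 2 P) (hc : IsLocalMin (qrisk k P) c) :
    qcentroidal k P c := by
  intro i
  have hV : MeasurableSet (vcell k c i) := (isClosed_vcell c i).measurableSet
  have hrisk : qrisk k P c = ∫ x in vcell k c i, ‖x - c i‖ ^ 2 ∂P
      + ∫ x in (vcell k c i)ᶜ, qgamma k c x ∂P := by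
    rw [qrisk, ← integral_add_compl hV (integrable_qgamma hP c),
      setIntegral_congr_fun hV fun x hx => qgamma_eq_of_mem_vcell hx]
  have hupdate (y : E) : qrisk k P (Function.update c i y)
      ≤ ∫ x in vcell k c i, ‖x - y‖ ^ 2 ∂P + ∫ x in (vcell k c i)ᶜ, qgamma k c x ∂P := by
    have hint := integrable_qgamma hP (Function.update c i y)
    rw [qrisk, ← integral_add_compl hV hint]
    refine add_le_add
      (setIntegral_mono hint.integrableOn (integrable_norm_sub_sq hP y).integrableOn fun x => ?_)
      (setIntegral_mono_on hint.integrableOn (integrable_qgamma hP c).integrableOn hV.compl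
        fun x hx => ?_)
    · simpa using qgamma_le (Function.update c i y) x i
    · obtain ⟨j, hj⟩ := not_forall.1 hx
      exact qgamma_update_le (by rintro rfl; exact hj le_rfl) (not_le.1 hj).le y
  have hcont : Tendsto (Function.update c i) (𝓝 (c i)) (𝓝 c) := by
    simpa using (continuous_const (y := c).update i continuous_id).tendsto (c i)
  refine integral_sub_eq_zero_of_isLocalMin (hP.restrict _) ?_
  filter_upwards [hcont.eventually hc] with y hy
  linarith [hupdate y]

theorem qcentroidal_of_mem_qopt (hP : MemLp id 2 P) (hc : c ∈ qopt k P) : qcentroidal k P c :=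
  qcentroidal_of_isLocalMin hP (Eventually.of_forall hc)

end Centroids

section Compactness

variable {E : Type*} [NormedAddCommGroup E] [MeasurableSpace E] [BorelSpace E] {k : ℕ} [NeZero k]
  {P : Measure E} [IsFiniteMeasure P]

theorem tendsto_qrisk_of_tendsto_norm_sub_sq (hP : MemLp id 2 P) {c : ℕ → Fin k → E}
    {a : Fin k → E} {w : Fin k → ℝ}
    (h : ∀ i x, Tendsto (fun n => ‖x - c n i‖ ^ 2) atTop (𝓝 (‖x - a i‖ ^ 2 + w i))) :
    Tendsto (fun n => qrisk k P (c n)) atTop (𝓝 (∫ x, qpower k a w x ∂P)) := by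
  obtain ⟨C, hC⟩ := (h 0 0).bddAbove_range
  have hbound (n : ℕ) (x : E) : ‖qgamma k (c n) x‖ ≤ 2 * (‖x‖ ^ 2 + C) := by
    have hCn : ‖c n 0‖ ^ 2 ≤ C := by simpa using hC (Set.mem_range_self n)
    calc ‖qgamma k (c n) x‖ = qgamma k (c n) x := Real.norm_of_nonneg (qgamma_nonneg _ _)
      _ ≤ ‖x - c n 0‖ ^ 2 := qgamma_le _ x 0
      _ ≤ (‖x‖ + ‖c n 0‖) ^ 2 := by gcongr; exact norm_sub_le _ _
      _ ≤ 2 * (‖x‖ ^ 2 + ‖c n 0‖ ^ 2) := add_sq_le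
      _ ≤ 2 * (‖x‖ ^ 2 + C) := by gcongr
  have hint : Integrable (fun x => 2 * (‖x‖ ^ 2 + C)) P :=
    ((hP.integrable_norm_pow two_ne_zero).add (integrable_const C)).const_mul 2
  exact tendsto_integral_of_dominated_convergence _
    (fun n => (integrable_qgamma hP (c n)).aestronglyMeasurable) hint
    (fun n => ae_of_all _ (hbound n))
    (ae_of_all _ fun x => tendsto_ciInf_of_finite fun i => h i x)

theorem exists_norm_le_qrisk_le [InnerProductSpace ℝ E] {M ρ : ℝ} (hP : MemLp id 2 P)
    (hM : mbounded P M) (hρ : 0 ≤ ρ) (hMρ : M ≤ ρ) (c : Fin k → E) :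
    ∃ c' : Fin k → E, (∀ i, ‖c' i‖ ≤ ρ) ∧ ((∀ i, ‖c' i‖ < ρ) → c' = c) ∧
      qrisk k P c' ≤ qrisk k P c := by
  choose c' hρc' heq hle using fun i => exists_norm_le_forall_norm_sub_le hρ (c i)
  refine ⟨c', hρc', fun h => funext fun i => heq i (h i),
    integral_mono_ae (integrable_qgamma hP _) (integrable_qgamma hP _) ?_⟩
  filter_upwards [hM.ae_norm_le] with x hx
  exact qgamma_mono fun i => hle i x (hx.trans hMρ)

variable [TopologicalSpace.SeparableSpace E]

theorem mem_qopt_and_eq_zero_of_integral_qpower_le (hP : MemLp id 2 P) (hsupp : suppGT P k)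
    {a : Fin k → E} {w : Fin k → ℝ} (hw : 0 ≤ w)
    (h : ∀ c, ∫ x, qpower k a w x ∂P ≤ qrisk k P c) : a ∈ qopt k P ∧ w = 0 := by
  have hle : qgamma k a ≤ qpower k a w := qgamma_le_qpower a hw
  have hrisk : qrisk k P a ≤ ∫ x, qpower k a w x ∂P :=
    integral_mono (integrable_qgamma hP a) (integrable_qpower hP a hw) hle
  have ha : a ∈ qopt k P := fun c => hrisk.trans (h c)
  refine ⟨ha, funext fun i => ?_⟩
  have heq : qgamma k a =ᵐ[P] qpower k a w :=
    (integral_eq_iff_of_ae_le (integrable_qgamma hP a) (integrable_qpower hP a hw)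
      (ae_of_all _ hle)).1 (hrisk.antisymm (h a))
  obtain ⟨x, hlt, hx⟩ :=
    ((frequently_forall_norm_sub_lt_of_mem_qopt hP hsupp ha i).and_eventually heq).exists
  obtain ⟨j, hj⟩ := exists_eq_ciInf_of_finite (f := fun j => ‖x - a j‖ ^ 2 + w j)
  have hji : ‖x - a j‖ ^ 2 + w j ≤ ‖x - a i‖ ^ 2 := by
    rw [hj]
    exact hx.symm.le.trans (qgamma_le a x i)
  obtain rfl : j = i := by
    by_contra hne
    have hsq : ‖x - a i‖ ^ 2 < ‖x - a j‖ ^ 2 := by gcongr; exact hlt j hne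
    linarith [show 0 ≤ w j from hw j]
  exact le_antisymm (by simpa using hji) (hw j)

variable [InnerProductSpace ℝ E] [CompleteSpace E]

theorem exists_subseq_tendsto_mem_qopt (hP : MemLp id 2 P) (hsupp : suppGT P k)
    {c : ℕ → Fin k → E} {C : ℝ} (hc : ∀ n i, ‖c n i‖ ≤ C) {cs : Fin k → E} (hcs : cs ∈ qopt k P)
    (hlim : Tendsto (fun n => qrisk k P (c n)) atTop (𝓝 (qrisk k P cs))) :
    ∃ a ∈ qopt k P, ∃ φ : ℕ → ℕ, StrictMono φ ∧ Tendsto (c ∘ φ) atTop (𝓝 a) := by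
  obtain ⟨a, w, φ, hφ, hpower⟩ := exists_subseq_tendsto_norm_sub_sq hc
  have hself (i : Fin k) : Tendsto (fun n => ‖a i - c (φ n) i‖ ^ 2) atTop (𝓝 (w i)) := by
    simpa using hpower i (a i)
  have hw : 0 ≤ w := fun i => ge_of_tendsto' (hself i) fun n => by positivity
  have hrisk : ∫ x, qpower k a w x ∂P = qrisk k P cs :=
    tendsto_nhds_unique (tendsto_qrisk_of_tendsto_norm_sub_sq hP hpower)
      (hlim.comp hφ.tendsto_atTop)
  obtain ⟨ha, rfl⟩ :=
    mem_qopt_and_eq_zero_of_integral_qpower_le hP hsupp hw fun c => hrisk.trans_le (hcs c)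
  refine ⟨a, ha, φ, hφ, tendsto_pi_nhds.2 fun i => tendsto_iff_norm_sub_tendsto_zero.2 ?_⟩
  simpa [norm_sub_rev] using (hself i).sqrt

theorem norm_le_of_mem_qopt {M : ℝ} (hM : mbounded P M) (hsupp : suppGT P k) {a : Fin k → E}
    (ha : a ∈ qopt k P) (i : Fin k) : ‖a i‖ ≤ M := by
  have hP := hM.memLp_id 2
  exact (qcentroidal_of_mem_qopt hP ha).norm_le (hP.integrable one_le_two) hM
    (measure_vcell_ne_zero_of_mem_qopt hP hsupp ha i)

theorem exists_pos_forall_notMem_add_le_qrisk {M : ℝ} (hM : mbounded P M) (hsupp : suppGT P k)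
    {U : Set (Fin k → E)} (hU : U ∈ 𝓝ˢ (qopt k P)) :
    ∃ ε > 0, ∀ c ∉ U, ∀ cs ∈ qopt k P, qrisk k P cs + ε ≤ qrisk k P c := by
  have hP := hM.memLp_id 2
  by_contra! hgap
  choose c hcU cs hcs hlt using fun n : ℕ => hgap (1 / (n + 1)) Nat.one_div_pos_of_nat
  have hMρ : M < |M| + 1 := (le_abs_self M).trans_lt (lt_add_one _)
  choose c' hbound heq hrisk using fun n =>
    exists_norm_le_qrisk_le hP hM (by positivity) hMρ.le (c n)
  have hlim : Tendsto (fun n => qrisk k P (c' n)) atTop (𝓝 (qrisk k P (cs 0))) := by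
    refine tendsto_of_tendsto_of_tendsto_of_le_of_le tendsto_const_nhds
      (by simpa using tendsto_one_div_add_atTop_nhds_zero_nat.const_add (qrisk k P (cs 0)))
      (fun n => hcs 0 (c' n)) fun n => ?_
    exact (hrisk n).trans ((hlt n).le.trans (by grw [hcs n (cs 0), one_div]))
  obtain ⟨a, ha, φ, -, hφ⟩ := exists_subseq_tendsto_mem_qopt hP hsupp hbound (hcs 0) hlim
  have hinside : ∀ᶠ n in atTop, ∀ i, ‖c' (φ n) i‖ < |M| + 1 :=
    eventually_all.2 fun i => (tendsto_pi_nhds.1 hφ i).norm.eventually_lt_const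
      ((norm_le_of_mem_qopt hM hsupp ha i).trans_lt hMρ)
  have hmem : ∀ᶠ n in atTop, c' (φ n) ∈ U := hφ.eventually (mem_nhdsSet_iff_forall.1 hU a ha)
  obtain ⟨n, hn, hnU⟩ := (hinside.and hmem).exists
  exact hcU (φ n) (heq (φ n) hn ▸ hnU)

end Compactness

section Isolation

variable {E : Type*} [NormedAddCommGroup E] {k : ℕ} [NeZero k] {a c : Fin k → E}

theorem inter_nbd_nonempty_of_isPreconnected {s : Set E} (hs : IsPreconnected s) {i j : Fin k}
    (hij : i ≠ j) (hi : (s ∩ vcell k a i).Nonempty) (hj : (s ∩ vcell k a j).Nonempty) :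
    (s ∩ nbd k a).Nonempty := by
  have hcover (x : E) : x ∈ vcell k a i ∪ ⋃ l : {l // l ≠ i}, vcell k a l := by
    obtain ⟨l, hl⟩ := exists_mem_vcell a x
    obtain rfl | hli := eq_or_ne l i
    exacts [Or.inl hl, Or.inr (Set.mem_iUnion.2 ⟨⟨l, hli⟩, hl⟩)]
  obtain ⟨z, hzs, hzi, hz⟩ := isPreconnected_closed_iff.1 hs _ _ (isClosed_vcell a i)
    (isClosed_iUnion_of_finite fun l : {l // l ≠ i} => isClosed_vcell a l) (fun x _ => hcover x) hi
    (hj.mono fun x hx => ⟨hx.1, Set.mem_iUnion.2 ⟨⟨j, hij.symm⟩, hx.2⟩⟩)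
  obtain ⟨⟨l, hl⟩, hzl⟩ := Set.mem_iUnion.1 hz
  simp only [nbd]
  exact ⟨z, hzs, Set.mem_iUnion₂.2 ⟨i, l, Set.mem_iUnion.2 ⟨hl.symm, hzi, hzl⟩⟩⟩

variable [InnerProductSpace ℝ E]

theorem exists_mem_nbd_dist_mul_le {x : E} {i j : Fin k} (hx : x ∈ vcell k a i) (hij : i ≠ j) :
    ∃ z ∈ nbd k a, dist x z * (2 * ‖a i - a j‖) ≤ ‖x - a j‖ ^ 2 - ‖x - a i‖ ^ 2 := by
  obtain ⟨y, hy, hdist⟩ := exists_equidistant_dist_mul_eq x (a i) (a j) (hx j)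
  obtain ⟨l, hil, hyl⟩ : ∃ l, i ≠ l ∧ y ∈ vcell k a l := by
    obtain ⟨l, hl⟩ := exists_mem_vcell a y
    obtain rfl | hil := eq_or_ne i l
    exacts [⟨j, hij, fun m => hy ▸ hl m⟩, ⟨l, hil, hl⟩]
  obtain ⟨z, hz, hznbd⟩ := inter_nbd_nonempty_of_isPreconnected (convex_segment x y).isPreconnected
    hil ⟨x, left_mem_segment ℝ x y, hx⟩ ⟨y, right_mem_segment ℝ x y, hyl⟩
  refine ⟨z, hznbd, hdist ▸ ?_⟩
  gcongr
  linarith [dist_add_dist_of_mem_segment hz, dist_nonneg (x := z) (y := y)]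

variable {b M : ℝ}

theorem mem_cthickening_nbd_of_mem_vcell_of_mem_vcell (ha : ∀ i, ‖a i‖ ≤ M) (hb : 0 < b)
    (hsep : ∀ i j, i ≠ j → b ≤ ‖a i - a j‖) {x : E} (hx : ‖x‖ ≤ M) {i j : Fin k} (hij : i ≠ j)
    (hxa : x ∈ vcell k a i) (hxc : x ∈ vcell k c j) :
    x ∈ cthickening (4 * M * dist c a / b) (nbd k a) := by
  obtain ⟨z, hz, hdist⟩ := exists_mem_nbd_dist_mul_le hxa hij
  refine mem_cthickening_of_dist_le x z _ _ hz ((le_div_iff₀ hb).2 ?_)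
  have hclose (l : Fin k) : ‖c l - a l‖ ≤ dist c a := by
    rw [← dist_eq_norm]
    exact dist_le_pi_dist c a l
  have hswap : ‖x - a j‖ ≤ ‖x - a i‖ + 2 * dist c a := by
    have hj : ‖x - a j‖ ≤ ‖x - c j‖ + ‖c j - a j‖ := norm_sub_le_norm_sub_add_norm_sub ..
    have hi : ‖x - c i‖ ≤ ‖x - a i‖ + ‖a i - c i‖ := norm_sub_le_norm_sub_add_norm_sub ..
    rw [norm_sub_rev (a i)] at hi
    linarith [hclose i, hclose j, hxc i]
  have hnorm (l : Fin k) : ‖x - a l‖ ≤ 2 * M := by linarith [norm_sub_le x (a l), ha l]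
  have hmul : dist x z * (2 * b) ≤ 8 * M * dist c a := by
    calc dist x z * (2 * b) ≤ dist x z * (2 * ‖a i - a j‖) := by gcongr; exact hsep i j hij
      _ ≤ ‖x - a j‖ ^ 2 - ‖x - a i‖ ^ 2 := hdist
      _ = (‖x - a j‖ - ‖x - a i‖) * (‖x - a j‖ + ‖x - a i‖) := by ring
      _ ≤ (2 * dist c a) * (2 * M + 2 * M) := by
        gcongr
        exacts [by linarith, hnorm j, hnorm i]
      _ = 8 * M * dist c a := by ring
  linarith

theorem symmDiff_vcell_inter_closedBall_subset (ha : ∀ i, ‖a i‖ ≤ M) (hb : 0 < b)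
    (hsep : ∀ i j, i ≠ j → b ≤ ‖a i - a j‖) (i : Fin k) :
    symmDiff (vcell k a i) (vcell k c i) ∩ closedBall 0 M
      ⊆ cthickening (4 * M * dist c a / b) (nbd k a) := by
  rintro x ⟨⟨hxa, hxc⟩ | ⟨hxc, hxa⟩, hxM⟩ <;> rw [mem_closedBall_zero_iff] at hxM
  · obtain ⟨j, hj⟩ := exists_mem_vcell c x
    have hij : i ≠ j := by rintro rfl; exact hxc hj
    exact mem_cthickening_nbd_of_mem_vcell_of_mem_vcell ha hb hsep hxM hij hxa hj
  · obtain ⟨j, hj⟩ := exists_mem_vcell a x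
    have hji : j ≠ i := by rintro rfl; exact hxa hj
    exact mem_cthickening_nbd_of_mem_vcell_of_mem_vcell ha hb hsep hxM hji hj hxc

variable [MeasurableSpace E] [BorelSpace E] [CompleteSpace E] {P : Measure E} [IsFiniteMeasure P]

theorem eq_of_qcentroidal_of_dist_le (hP : Integrable id P) (hM : mbounded P M)
    (hca : qcentroidal k P a) (hcc : qcentroidal k P c) (ha : ∀ i, ‖a i‖ ≤ M) (hb : 0 < b)
    (hsep : ∀ i j, i ≠ j → b ≤ ‖a i - a j‖) {r : ℝ}
    (hmass : ∀ t, 0 < t → t ≤ r → ∀ i,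
      12 * M ^ 2 * P.real (cthickening t (nbd k a)) < b * P.real (vcell k a i) * t)
    (hdM : dist c a ≤ M) (hdr : 4 * M * dist c a / b ≤ r) : c = a := by
  by_contra hne
  have hd : 0 < dist c a := dist_pos.2 hne
  have hM0 : 0 < M := hd.trans_le hdM
  obtain ⟨i, hi⟩ : ∃ i, dist c a ≤ dist (c i) (a i) := by
    obtain ⟨i, hi⟩ := Finite.exists_max fun i => dist (c i) (a i)
    exact ⟨i, (dist_pi_le_iff dist_nonneg).2 hi⟩
  set t := 4 * M * dist c a / b with ht
  have hci : ‖c i‖ ≤ 2 * M := by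
    have hdi := dist_le_pi_dist c a i
    rw [dist_eq_norm] at hdi
    linarith [norm_le_norm_add_norm_sub' (c i) (a i), ha i]
  have hsymm : P.real (symmDiff (vcell k a i) (vcell k c i))
      ≤ P.real (cthickening t (nbd k a)) := by
    refine ENNReal.toReal_mono (measure_ne_top _ _) (measure_mono_ae ?_)
    filter_upwards [mem_ae_iff.2 hM] with x hxM hx
    exact symmDiff_vcell_inter_closedBall_subset ha hb hsep i ⟨hx, hxM⟩
  have hdrift : P.real (vcell k a i) * dist c a ≤ 3 * M * P.real (cthickening t (nbd k a)) := by
    calc P.real (vcell k a i) * dist c a ≤ P.real (vcell k a i) * ‖c i - a i‖ := by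
          rw [← dist_eq_norm]
          gcongr
      _ ≤ (M + ‖c i‖) * P.real (symmDiff (vcell k a i) (vcell k c i)) :=
        measureReal_mul_norm_sub_le hP hM.ae_norm_le (isClosed_vcell a i).measurableSet
          (isClosed_vcell c i).measurableSet (hca i) (hcc i)
      _ ≤ 3 * M * P.real (cthickening t (nbd k a)) := by
        gcongr
        linarith
  have hstrict := hmass t (by positivity) hdr i
  have hbt : b * P.real (vcell k a i) * t = 4 * M * (P.real (vcell k a i) * dist c a) := by
    rw [ht]
    field_simp
  nlinarith

end Isolation

section Margin

variable {E : Type*} [NormedAddCommGroup E] [MeasurableSpace E] {k : ℕ} {P : Measure E}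
  {a : Fin k → E}

theorem qB_le (ha : a ∈ qopt k P) {i j : Fin k} (hij : i ≠ j) : qB k P ≤ ‖a i - a j‖ :=
  csInf_le ⟨0, by rintro _ ⟨c, -, i, j, -, rfl⟩; positivity⟩ ⟨a, ha, i, j, hij, rfl⟩

theorem qpmin_le (ha : a ∈ qopt k P) (i : Fin k) : qpmin k P ≤ P.real (vcell k a i) :=
  csInf_le ⟨0, by rintro _ ⟨c, -, i, rfl⟩; positivity⟩ ⟨a, ha, i, rfl⟩

theorem qpmin_nonneg : 0 ≤ qpmin k P :=
  Real.sInf_nonneg (by rintro _ ⟨c, -, i, rfl⟩; positivity)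

variable [IsFiniteMeasure P]

theorem measureReal_cthickening_nbd_le_pweight (ha : a ∈ qopt k P) (t : ℝ) :
    P.real (cthickening t (nbd k a)) ≤ pweight k P t :=
  le_csSup ⟨P.real Set.univ, by rintro _ ⟨c, -, rfl⟩; exact measureReal_mono (Set.subset_univ _)⟩
    ⟨a, ha, rfl⟩

variable {M r₀ : ℝ}

theorem margin.measureReal_cthickening_nbd_lt (h : margin k P M r₀) (ha : a ∈ qopt k P) {b : ℝ}
    (hb : 0 < b) (hqB : qB k P ≤ b) {i : Fin k} (hi : P (vcell k a i) ≠ 0) {t : ℝ} (ht : 0 < t)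
    (htr : t ≤ r₀) :
    12 * M ^ 2 * P.real (cthickening t (nbd k a)) < b * P.real (vcell k a i) * t := by
  have hi0 : 0 < P.real (vcell k a i) := ENNReal.toReal_pos hi (measure_ne_top _ _)
  have hscale : qB k P * qpmin k P * t ≤ b * P.real (vcell k a i) * t := by
    gcongr
    exacts [qpmin_nonneg, qpmin_le ha i]
  have hmass : P.real (cthickening t (nbd k a))
      ≤ b * P.real (vcell k a i) * t / (128 * M ^ 2) := by
    grw [measureReal_cthickening_nbd_le_pweight ha t, h.2.2 t ht.le htr, hscale]
  have hclear := mul_le_of_le_div₀ (by positivity) (by positivity) hmass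
  have hpos : 0 < b * P.real (vcell k a i) * t := by positivity
  linarith

variable [BorelSpace E] [TopologicalSpace.SeparableSpace E] [k.AtLeastTwo]

theorem exists_pos_le_norm_sub_of_mem_qopt (hP : MemLp id 2 P) (hsupp : suppGT P k)
    (ha : a ∈ qopt k P) :
    ∃ b > 0, qB k P ≤ b ∧ ∀ i j, i ≠ j → b ≤ ‖a i - a j‖ := by
  have : Nonempty {p : Fin k × Fin k // p.1 ≠ p.2} := by
    obtain ⟨i, j, hij⟩ := exists_pair_ne (Fin k)
    exact ⟨(i, j), hij⟩
  obtain ⟨⟨p, hp⟩, hmin⟩ :=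
    Finite.exists_min fun p : {p : Fin k × Fin k // p.1 ≠ p.2} => ‖a p.1.1 - a p.1.2‖
  have hne : a p.1 - a p.2 ≠ 0 := sub_ne_zero.2 ((injective_of_mem_qopt hP hsupp ha).ne hp)
  exact ⟨‖a p.1 - a p.2‖, norm_pos_iff.2 hne, qB_le ha hp, fun i j hij => hmin ⟨(i, j), hij⟩⟩

variable [InnerProductSpace ℝ E] [CompleteSpace E]

theorem margin.eventually_eq_of_qcentroidal (h : margin k P M r₀) (hM : 0 < M)
    (hsupp : suppGT P k) (ha : a ∈ qopt k P) : ∀ᶠ c in 𝓝 a, qcentroidal k P c → c = a := by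
  have hP := h.2.1.memLp_id 2
  obtain ⟨b, hb, hqB, hsep⟩ := exists_pos_le_norm_sub_of_mem_qopt hP hsupp ha
  have hscaled : ContinuousAt (fun c => 4 * M * dist c a / b) a := by fun_prop
  filter_upwards [closedBall_mem_nhds a hM,
    hscaled.eventually_le_const (u := r₀) (by simpa using h.1)] with c hcM hcr hc
  exact eq_of_qcentroidal_of_dist_le (hP.integrable one_le_two) h.2.1
    (qcentroidal_of_mem_qopt hP ha) hc (norm_le_of_mem_qopt h.2.1 hsupp ha) hb hsep
    (fun t ht htr i => h.measureReal_cthickening_nbd_lt ha hb hqB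
      (measure_vcell_ne_zero_of_mem_qopt hP hsupp ha i) ht htr) hcM hcr

theorem margin.isLocalMin_imp_mem_qopt_mem_nhdsSet (h : margin k P M r₀) (hM : 0 < M)
    (hsupp : suppGT P k) :
    {c | IsLocalMin (qrisk k P) c → c ∈ qopt k P} ∈ 𝓝ˢ (qopt k P) := by
  refine mem_nhdsSet_iff_forall.2 fun a ha => ?_
  filter_upwards [h.eventually_eq_of_qcentroidal hM hsupp ha] with c hc hmin
  exact hc (qcentroidal_of_isLocalMin (h.2.1.memLp_id 2) hmin) ▸ ha

end Margin

section NonoptimalLocalMinimizer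

variable {E : Type*} [NormedAddCommGroup E] {k : ℕ} {c : Fin k → E} {i : Fin k} {M : ℝ}

theorem mem_vcell_of_norm_le {x : E} (hx : ‖x‖ ≤ M) (hc : ∀ j ≠ i, ‖c i‖ + 2 * M ≤ ‖c j‖) :
    x ∈ vcell k c i := by
  intro j
  obtain rfl | hji := eq_or_ne j i
  · exact le_rfl
  · linarith [norm_sub_le x (c i), norm_sub_norm_le (c j) x, norm_sub_rev (c j) x, hc j hji]

variable [MeasurableSpace E] {P : Measure E}

theorem qrisk_eq_integral_norm_sub_sq [NeZero k] (hM : mbounded P M)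
    (hc : ∀ j ≠ i, ‖c i‖ + 2 * M ≤ ‖c j‖) : qrisk k P c = ∫ x, ‖x - c i‖ ^ 2 ∂P := by
  refine integral_congr_ae ?_
  filter_upwards [hM.ae_norm_le] with x hx
  exact qgamma_eq_of_mem_vcell (mem_vcell_of_norm_le hx hc)

variable [BorelSpace E] [SecondCountableTopology E] [InnerProductSpace ℝ E] [CompleteSpace E]
  [IsFiniteMeasure P] [k.AtLeastTwo]

/- One code point at the mean, all others so far away that their cells stay empty under small
perturbations. -/
theorem exists_isLocalMin_notMem_qopt (hM : mbounded P M) (hsupp : suppGT P k) :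
    ∃ c, IsLocalMin (qrisk k P) c ∧ c ∉ qopt k P := by
  have hP := hM.memLp_id 2
  have : Nontrivial E := hsupp.nontrivial
  obtain ⟨v, hv⟩ := NormedSpace.exists_lt_norm ℝ E (‖⨍ x, x ∂P‖ + 2 * M)
  set c : Fin k → E := Function.update (fun _ => v) 0 (⨍ x, x ∂P) with hc
  have hmean : ∫ x, (x - c 0) ∂P = 0 := by
    simpa [hc] using integral_sub_average P fun x => x
  have hfar (j : Fin k) (hj : j ≠ 0) : ‖c 0‖ + 2 * M < ‖c j‖ := by simpa [hc, hj] using hv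
  refine ⟨c, ?_, fun hopt => ?_⟩
  · have hnear : ∀ᶠ c' in 𝓝 c, ∀ j ≠ 0, ‖c' 0‖ + 2 * M < ‖c' j‖ :=
      eventually_all.2 fun j => eventually_imp_distrib_left.2 fun hj =>
        (isOpen_lt (by fun_prop) (by fun_prop)).mem_nhds (hfar j hj)
    filter_upwards [hnear] with c' hc'
    rw [qrisk_eq_integral_norm_sub_sq hM fun j hj => (hfar j hj).le,
      qrisk_eq_integral_norm_sub_sq hM fun j hj => (hc' j hj).le]
    exact integral_norm_sub_sq_le_of_integral_sub_eq_zero hP hmean (c' 0)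
  · obtain ⟨j, hj⟩ := exists_ne (0 : Fin k)
    obtain ⟨x, hlt, hx⟩ := ((frequently_forall_norm_sub_lt_of_mem_qopt hP hsupp hopt
      j).and_eventually hM.ae_norm_le).exists
    exact (hlt 0 hj.symm).not_ge (mem_vcell_of_norm_le hx (fun l hl => (hfar l hl).le) j)

end NonoptimalLocalMinimizer

section Separation

variable {E : Type*} [NormedAddCommGroup E] [MeasurableSpace E] {k : ℕ} {P : Measure E}

theorem exists_qseparated_of_le {ε : ℝ} (hε : 0 < ε) (hne : (qopt k P).Nonempty)
    (hex : ∃ c, IsLocalMin (qrisk k P) c ∧ c ∉ qopt k P)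
    (hgap : ∀ c, IsLocalMin (qrisk k P) c → c ∉ qopt k P →
      ∀ cs ∈ qopt k P, qrisk k P cs + ε ≤ qrisk k P c) :
    ∃ δ, 0 < δ ∧ qseparated k P δ := by
  obtain ⟨cs, hcs⟩ := hne
  obtain ⟨c, hc, hcopt⟩ := hex
  refine ⟨sInf {r | ∃ c, IsLocalMin (qrisk k P) c ∧ c ∉ qopt k P ∧ r = qrisk k P c - qrisk k P cs},
    hε.trans_le (le_csInf ⟨_, c, hc, hcopt, rfl⟩ ?_), fun cs' hcs' => ?_⟩
  · rintro _ ⟨c, hc, hcopt, rfl⟩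
    linarith [hgap c hc hcopt cs hcs]
  · rw [(hcs' cs).antisymm (hcs cs')]

end Separation

/-- Proposition 2.2 (iii): under the margin condition, `P` is `ε`-separated for
some `ε > 0`. -/
theorem stmt3 [BorelSpace H] [SecondCountableTopology H] [CompleteSpace H]
    (k : ℕ) (hk : 2 ≤ k) (P : Measure H) [IsProbabilityMeasure P]
    (M : ℝ) (hM : 0 < M) (hsupp : suppGT P k) (hne : (qopt k P).Nonempty)
    (r0 : ℝ) (hmargin : margin k P M r0) :
    ∃ ε : ℝ, 0 < ε ∧ qseparated k P ε := by
  have : k.AtLeastTwo := ⟨hk⟩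
  obtain ⟨ε, hε, hgap⟩ := exists_pos_forall_notMem_add_le_qrisk hmargin.2.1 hsupp
    (hmargin.isLocalMin_imp_mem_qopt_mem_nhdsSet hM hsupp)
  exact exists_qseparated_of_le hε hne (exists_isLocalMin_notMem_qopt hmargin.2.1 hsupp)
    fun c hmin hcopt => hgap c fun himp => hcopt (himp hmin)

end
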